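/- arXiv:0911.4941 — 6 statements merged into one kernel-verified Lean document; each statement's English description precedes it below -/
import Mathlib

section
/- Let p be a prime, R a commutative ring containing 𝔽_p equipped with a Frobenius splitting φ, I an ideal compatibly split by φ, and J an arbitrary ideal of R. Then the colon ideal I : J = {r ∈ R : rJ ⊆ I} is compatibly split by φ. In particular, every minimal prime ideal over I is compatibly split by φ. -/
/-- A Frobenius splitting of a commutative ring `R` (containing `𝔽_p`) is an additive map
`φ : R → R` with `φ (a^p * b) = a * φ b` and `φ 1 = 1`. -/
def IsFrobeniusSplitting (p : ℕ) {R : Type*} [CommRing R] (φ : R → R) : Prop :=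
  (∀ a b : R, φ (a + b) = φ a + φ b) ∧ (∀ a b : R, φ (a ^ p * b) = a * φ b) ∧ φ 1 = 1

/-!
If `a * b ∈ I`, then `a ^ p * b ∈ I`, so applying `φ` gives `a * φ b ∈ I`: membership in `I` of a
product survives replacing one factor by its image. For colon ideals this is the claim. If `r` lies
in a minimal prime `P` over `I`, then `r` is nilpotent in `R_P / I R_P`, that is, `s * r ^ n ∈ I`
for some `s ∉ P`; replacing the `n` factors `r` one at a time gives `s * φ r ^ n ∈ I ≤ P`, whence
`φ r ∈ P`.
-/

section Semiring

variable {R : Type*} [CommSemiring R]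

theorem exists_notMem_mul_pow_mem_of_mem_minimalPrimes {I P : Ideal R}
    (hP : P ∈ I.minimalPrimes) {r : R} (hr : r ∈ P) : ∃ s ∉ P, ∃ n : ℕ, s * r ^ n ∈ I := by
  have := hP.isPrime
  let A := Localization.AtPrime P
  have hrad : algebraMap R A r ∈ (I.map (algebraMap R A)).radical := by
    rw [IsLocalization.AtPrime.radical_map_of_mem_minimalPrimes A P I hP]
    exact Ideal.mem_map_of_mem _ hr
  obtain ⟨n, hn⟩ := Ideal.mem_radical_iff.mp hrad
  rw [← map_pow, IsLocalization.algebraMap_mem_map_algebraMap_iff P.primeCompl] at hn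
  obtain ⟨s, hs, hsr⟩ := hn
  exact ⟨s, hs, n, hsr⟩

variable {p : ℕ} {φ : R → R} {I : Ideal R}

theorem mul_map_mem_of_mul_mem (hp : p ≠ 0) (hφ : ∀ a b, φ (a ^ p * b) = a * φ b)
    (hI : Set.MapsTo φ I I) {a b : R} (hab : a * b ∈ I) : a * φ b ∈ I := by
  have hpow : a ^ p * b ∈ I := I.mem_of_dvd (mul_dvd_mul_right (dvd_pow_self a hp) b) hab
  exact hφ a b ▸ hI hpow

theorem mul_map_pow_mem_of_mul_pow_mem (hp : p ≠ 0) (hφ : ∀ a b, φ (a ^ p * b) = a * φ b)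
    (hI : Set.MapsTo φ I I) {s r : R} {n : ℕ} (h : s * r ^ n ∈ I) : s * φ r ^ n ∈ I := by
  induction n generalizing s with
  | zero => simpa only [pow_zero] using h
  | succ n ih =>
    rw [pow_succ, ← mul_assoc] at h
    have hlast : s * φ r * r ^ n ∈ I :=
      mul_right_comm s (r ^ n) (φ r) ▸ mul_map_mem_of_mul_mem hp hφ hI h
    rw [pow_succ', ← mul_assoc]
    exact ih hlast

theorem mapsTo_colon (hp : p ≠ 0) (hφ : ∀ a b, φ (a ^ p * b) = a * φ b)
    (hI : Set.MapsTo φ I I) (S : Set R) : Set.MapsTo φ (I.colon S) (I.colon S) := by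
  intro r hr
  simp only [SetLike.mem_coe, Submodule.mem_colon, smul_eq_mul] at hr ⊢
  intro j hj
  rw [mul_comm]
  exact mul_map_mem_of_mul_mem hp hφ hI (mul_comm r j ▸ hr j hj)

theorem mapsTo_of_mem_minimalPrimes (hp : p ≠ 0) (hφ : ∀ a b, φ (a ^ p * b) = a * φ b)
    (hI : Set.MapsTo φ I I) {P : Ideal R} (hP : P ∈ I.minimalPrimes) : Set.MapsTo φ P P := by
  intro r hr
  obtain ⟨s, hs, n, hsr⟩ := exists_notMem_mul_pow_mem_of_mem_minimalPrimes hP hr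
  have hsφ : s * φ r ^ n ∈ P := hP.le (mul_map_pow_mem_of_mul_pow_mem hp hφ hI hsr)
  exact hP.isPrime.mem_of_pow_mem n ((hP.isPrime.mem_or_mem hsφ).resolve_left hs)

theorem stmt_3_general (hp : p ≠ 0) (hφ : ∀ a b, φ (a ^ p * b) = a * φ b)
    (hI : Set.MapsTo φ I I) (S : Set R) :
    Set.MapsTo φ (I.colon S) (I.colon S) ∧ ∀ P ∈ I.minimalPrimes, Set.MapsTo φ P P :=
  ⟨mapsTo_colon hp hφ hI S, fun _ hP ↦ mapsTo_of_mem_minimalPrimes hp hφ hI hP⟩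

end Semiring

/-- if `I` is compatibly split and `J` is arbitrary, then the colon ideal
`I : J = {r | r • J ⊆ I}` is compatibly split; in particular every minimal prime over `I`
is compatibly split. -/
theorem stmt_3 {p : ℕ} (hp : p.Prime) {R : Type*} [CommRing R] [CharP R p]
    (φ : R → R) (hφ : IsFrobeniusSplitting p φ) (I J : Ideal R)
    (hI : ∀ r ∈ I, φ r ∈ I) :
    (∀ r ∈ I.colon J, φ r ∈ I.colon J) ∧
      ∀ P ∈ I.minimalPrimes, ∀ r ∈ P, φ r ∈ P :=
  stmt_3_general hp.ne_zero hφ.2.1 hI J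
end

section
/- Let p be a prime and R a commutative ring containing 𝔽_p. Let φ : R → R be a near-splitting such that φ(1) is not a zero divisor in R. Then R is reduced; moreover, if I and J are ideals compatibly near-split by φ then I ∩ J and I + J are compatibly near-split by φ, and for I compatibly near-split and J an arbitrary ideal the colon ideal I : J = {r ∈ R : rJ ⊆ I} is compatibly near-split by φ. -/
/-- A (Frobenius) near-splitting of a commutative ring `R` (containing `𝔽_p`) is an
additive map `φ : R → R` with `φ (a^p * b) = a * φ b`. -/
def IsFrobeniusNearSplitting (p : ℕ) {R : Type*} [CommRing R] (φ : R → R) : Prop :=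
  (∀ a b : R, φ (a + b) = φ a + φ b) ∧ (∀ a b : R, φ (a ^ p * b) = a * φ b)

theorem mapsTo_sup_of_map_add {R M M' : Type*} [Semiring R] [AddCommMonoid M] [Module R M]
    [AddCommMonoid M'] [Module R M'] {f : M → M'} (hf : ∀ x y, f (x + y) = f x + f y)
    {N P : Submodule R M} {N' P' : Submodule R M'} (hN : Set.MapsTo f N N')
    (hP : Set.MapsTo f P P') : Set.MapsTo f ↑(N ⊔ P) ↑(N' ⊔ P') := by
  intro z hz
  obtain ⟨x, hx, y, hy, rfl⟩ := Submodule.mem_sup.mp hz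
  rw [hf]
  exact Submodule.add_mem_sup (hN hx) (hP hy)

namespace IsFrobeniusNearSplitting

variable {q : ℕ} {R : Type*} [CommRing R] {φ : R → R}

theorem map_add (hφ : IsFrobeniusNearSplitting q φ) (a b : R) : φ (a + b) = φ a + φ b :=
  hφ.1 a b

theorem map_pow_mul (hφ : IsFrobeniusNearSplitting q φ) (a b : R) : φ (a ^ q * b) = a * φ b :=
  hφ.2 a b

theorem map_pow (hφ : IsFrobeniusNearSplitting q φ) (a : R) : φ (a ^ q) = a * φ 1 := by
  simpa only [mul_one] using hφ.map_pow_mul a 1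

theorem map_zero (hφ : IsFrobeniusNearSplitting q φ) : φ 0 = 0 := by
  simpa only [mul_zero, zero_mul] using hφ.map_pow_mul 0 0

theorem isReduced (hφ : IsFrobeniusNearSplitting q φ) (hq : 1 < q)
    (hφ1 : φ 1 ∈ nonZeroDivisors R) : IsReduced R := by
  refine (isReduced_iff_pow_one_lt q hq).mpr fun a ha ↦ ?_
  have ha_mul : a * φ 1 = 0 := by rw [← hφ.map_pow, ha, hφ.map_zero]
  exact (mul_right_mem_nonZeroDivisors_eq_zero_iff hφ1).mp ha_mul

theorem mapsTo_colon (hφ : IsFrobeniusNearSplitting q φ) (hq : q ≠ 0) {I : Ideal R}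
    (hI : Set.MapsTo φ I I) (S : Set R) : Set.MapsTo φ (I.colon S) (I.colon S) := by
  intro r hr
  refine Submodule.mem_colon.mpr fun s hs ↦ ?_
  have hrs : s * r ∈ I := by
    simpa only [smul_eq_mul, mul_comm] using Submodule.mem_colon.mp hr s hs
  have hpow : s ^ q * r ∈ I := I.mem_of_dvd (mul_dvd_mul_right (dvd_pow_self s hq) r) hrs
  have hmul : s * φ r ∈ I := hφ.map_pow_mul s r ▸ hI hpow
  rwa [smul_eq_mul, mul_comm]

end IsFrobeniusNearSplitting

/-- The case `q = p ^ e` concerns near-splittings of the `e`-th iterate of Frobenius. -/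
theorem stmt_4_general {q : ℕ} (hq : 1 < q) {R : Type*} [CommRing R]
    (φ : R → R) (hφ : IsFrobeniusNearSplitting q φ)
    (hφ1 : φ 1 ∈ nonZeroDivisors R) :
    IsReduced R ∧
      (∀ I J : Ideal R, (∀ r ∈ I, φ r ∈ I) → (∀ r ∈ J, φ r ∈ J) →
        (∀ r ∈ I ⊓ J, φ r ∈ I ⊓ J) ∧ (∀ r ∈ I + J, φ r ∈ I + J)) ∧
      (∀ I J : Ideal R, (∀ r ∈ I, φ r ∈ I) →
        ∀ r ∈ I.colon J, φ r ∈ I.colon J) :=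
  ⟨hφ.isReduced hq hφ1,
    fun _ _ hI hJ ↦ ⟨Set.MapsTo.inter_inter hI hJ, mapsTo_sup_of_map_add hφ.map_add hI hJ⟩,
    fun _ J hI ↦ hφ.mapsTo_colon (Nat.ne_zero_of_lt hq) hI J⟩

/-- if `φ` is a near-splitting with `φ 1` a non-zerodivisor, then `R` is
reduced; intersections and sums of compatibly near-split ideals are compatibly near-split;
and colon ideals `I : J` of a compatibly near-split ideal `I` by an arbitrary ideal `J`
are compatibly near-split. -/
theorem stmt_4 {p : ℕ} (hp : p.Prime) {R : Type*} [CommRing R] [CharP R p]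
    (φ : R → R) (hφ : IsFrobeniusNearSplitting p φ)
    (hφ1 : φ 1 ∈ nonZeroDivisors R) :
    IsReduced R ∧
      (∀ I J : Ideal R, (∀ r ∈ I, φ r ∈ I) → (∀ r ∈ J, φ r ∈ J) →
        (∀ r ∈ I ⊓ J, φ r ∈ I ⊓ J) ∧ (∀ r ∈ I + J, φ r ∈ I + J)) ∧
      (∀ I J : Ideal R, (∀ r ∈ I, φ r ∈ I) →
        ∀ r ∈ I.colon J, φ r ∈ I.colon J) :=
  stmt_4_general hp.one_lt φ hφ hφ1
end

section
/- Let p be a prime, n ≥ 1, and f ∈ 𝔽_p[x₁,…,xₙ]. (1) If Tr(f^{p−1}) is a unit of 𝔽_p[x₁,…,xₙ], i.e. a nonzero constant, and c ∈ 𝔽_p is its inverse, then the map g ↦ c·Tr(f^{p−1}·g) is a Frobenius splitting of 𝔽_p[x₁,…,xₙ]. (2) The principal ideal ⟨f⟩ is compatibly near-split by the near-splitting g ↦ Tr(f^{p−1}·g); in particular, if c·Tr(f^{p−1}) = 1 then ⟨f⟩ is compatibly split by the Frobenius splitting g ↦ c·Tr(f^{p−1}·g). -/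
open MvPolynomial

/-- The near-splitting `Tr` on `𝔽_p[x₁,…,xₙ]`: on a monomial `∏ xᵢ^{eᵢ}` it gives
`∏ xᵢ^{(eᵢ+1)/p - 1}` if `p ∣ eᵢ + 1` for all `i`, and `0` otherwise, extended
`𝔽_p`-linearly (note that `c^{1/p} = c` for `c ∈ 𝔽_p`). -/
noncomputable def Tr (p n : ℕ) (g : MvPolynomial (Fin n) (ZMod p)) :
    MvPolynomial (Fin n) (ZMod p) :=
  ∑ m ∈ g.support,
    if ∀ i, p ∣ (m i + 1) then
      monomial (Finsupp.equivFunOnFinite.symm fun i => (m i + 1) / p - 1) (g.coeff m)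
    else 0

/-!
Over a perfect ring of exponential characteristic `p`, every polynomial is uniquely of the form
`g = ∑ g_u ^ p * x ^ u` over the exponents `u` with all entries `< p`, and over `𝔽_p` the coordinate
`g_u` at `u = (p - 1, …, p - 1)` is `Tr g`. Multiplying the expansion by `a ^ p` multiplies each
coordinate by `a`, so each coordinate map is a near-splitting.
For any near-splitting `φ`, the identity `f ^ (p - 1) * (f * h) = f ^ p * h` gives
`φ (f ^ (p - 1) * (f * h)) = f * φ h`, so `⟨f⟩` is compatible with `g ↦ φ (f ^ (p - 1) * g)`.
-/

/-- A near-splitting (a `p⁻¹`-linear map) of `R`: an additive map with `φ (a ^ p * b) = a * φ b`,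
but with no condition on `φ 1`. -/
structure IsNearSplitting (p : ℕ) {R : Type*} [CommSemiring R] (φ : R → R) : Prop where
  map_add : ∀ a b, φ (a + b) = φ a + φ b
  map_pow_mul : ∀ a b, φ (a ^ p * b) = a * φ b

namespace IsNearSplitting

section CommSemiring

variable {R : Type*} [CommSemiring R] {p : ℕ} {φ : R → R}

lemma mul_comp_mul (hφ : IsNearSplitting p φ) (c d : R) :
    IsNearSplitting p fun g ↦ c * φ (d * g) where
  map_add a b := by rw [mul_add, hφ.map_add, mul_add]
  map_pow_mul a b := by rw [mul_left_comm, hφ.map_pow_mul, mul_left_comm]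

lemma map_pow_sub_one_mul_mem_span (hφ : IsNearSplitting p φ) (hp : p ≠ 0) {f g : R}
    (hg : g ∈ Ideal.span {f}) : φ (f ^ (p - 1) * g) ∈ Ideal.span {f} := by
  obtain ⟨h, rfl⟩ := Ideal.mem_span_singleton.mp hg
  rw [← mul_assoc, pow_sub_one_mul hp, hφ.map_pow_mul]
  exact Ideal.mem_span_singleton.mpr (dvd_mul_right f _)

end CommSemiring

lemma isFrobeniusSplitting_mul_comp_mul {R : Type*} [CommRing R] {p : ℕ} {φ : R → R}
    (hφ : IsNearSplitting p φ) {c d : R} (hcd : c * φ d = 1) :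
    IsFrobeniusSplitting p fun g ↦ c * φ (d * g) :=
  have h := hφ.mul_comp_mul c d
  ⟨h.map_add, h.map_pow_mul, by simpa only [mul_one] using hcd⟩

end IsNearSplitting

lemma nsmul_le_nsmul_add_iff {σ : Type*} {p : ℕ} {u : σ →₀ ℕ} (hu : ∀ i, u i < p)
    {k m : σ →₀ ℕ} : p • k ≤ p • m + u ↔ k ≤ m := by
  refine ⟨fun h i ↦ ?_, fun h ↦ (nsmul_le_nsmul_right h p).trans le_self_add⟩
  have hi : p * k i < p * (m i + 1) := by
    calc p * k i ≤ p * m i + u i := h i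
      _ < p * m i + p := Nat.add_lt_add_left (hu i) _
      _ = p * (m i + 1) := (mul_add_one _ _).symm
  exact Nat.lt_succ_iff.mp (Nat.lt_of_mul_lt_mul_left hi)

section FrobeniusCoord

variable {σ R : Type*} [CommSemiring R] (p : ℕ) [ExpChar R p] [PerfectRing R p]

/-- The coordinate of `g` at `x ^ u` with respect to Frobenius. When all entries of `u` are `< p`,
it is the `g_u` in the unique expansion `g = ∑ g_v ^ p * x ^ v` over the exponents `v` with entries
`< p`; it is encoded, for every `u`, by letting the coefficient at `m` be the `p`-th root of the
coefficient of `g` at `p • m + u`. -/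
noncomputable def frobeniusCoord (u : σ →₀ ℕ) (g : MvPolynomial σ R) : MvPolynomial σ R :=
  map (frobeniusEquiv R p).symm
    (AddMonoidAlgebra.comapDomain (fun m ↦ p • m + u)
      ((add_left_injective u).comp (nsmul_right_injective (expChar_ne_zero R p))) g)

@[simp]
lemma coeff_frobeniusCoord (u m : σ →₀ ℕ) (g : MvPolynomial σ R) :
    coeff m (frobeniusCoord p u g) = (frobeniusEquiv R p).symm (coeff (p • m + u) g) := by
  simp only [frobeniusCoord, coeff_map]
  rfl

lemma frobeniusCoord_add (u : σ →₀ ℕ) (a b : MvPolynomial σ R) :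
    frobeniusCoord p u (a + b) = frobeniusCoord p u a + frobeniusCoord p u b := by
  ext m
  simp only [coeff_frobeniusCoord, coeff_add, map_add]

lemma frobeniusCoord_monomial_pow_mul {u : σ →₀ ℕ} (hu : ∀ i, u i < p) (k : σ →₀ ℕ) (c : R)
    (b : MvPolynomial σ R) :
    frobeniusCoord p u (monomial k c ^ p * b) = monomial k c * frobeniusCoord p u b := by
  ext m
  simp only [coeff_frobeniusCoord, monomial_pow, coeff_monomial_mul', nsmul_le_nsmul_add_iff hu]
  split_ifs with hkm
  · obtain ⟨d, rfl⟩ := exists_add_of_le hkm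
    have hd : p • (k + d) + u - p • k = p • d + u := by
      rw [nsmul_add, add_assoc, add_tsub_cancel_left]
    rw [hd, map_mul, frobeniusEquiv_symm_pow, add_tsub_cancel_left]
  · exact map_zero _

lemma isNearSplitting_frobeniusCoord {u : σ →₀ ℕ} (hu : ∀ i, u i < p) :
    IsNearSplitting p (frobeniusCoord p u : MvPolynomial σ R → MvPolynomial σ R) where
  map_add := frobeniusCoord_add p u
  map_pow_mul a b := by
    induction a using MvPolynomial.induction_on' with
    | monomial k c => exact frobeniusCoord_monomial_pow_mul p hu k c b
    | add a₁ a₂ h₁ h₂ => rw [add_pow_expChar, add_mul, frobeniusCoord_add, h₁, h₂, add_mul]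

end FrobeniusCoord

lemma dvd_add_one_and_div_sub_one_eq_iff {p e m : ℕ} (hp : 0 < p) :
    p ∣ e + 1 ∧ (e + 1) / p - 1 = m ↔ p * m + (p - 1) = e := by
  constructor
  · rintro ⟨⟨k, hk⟩, rfl⟩
    obtain _ | k := k
    · omega
    · rw [hk, Nat.mul_div_cancel_left _ hp, add_tsub_cancel_right]
      rw [mul_add_one] at hk
      omega
  · rintro rfl
    have h : p * m + (p - 1) + 1 = p * (m + 1) := by rw [mul_add_one]; omega
    rw [h, Nat.mul_div_cancel_left _ hp]
    exact ⟨dvd_mul_right p _, Nat.add_sub_cancel m 1⟩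

lemma coeff_Tr {p : ℕ} (hp : 0 < p) {n : ℕ} (g : MvPolynomial (Fin n) (ZMod p))
    (m : Fin n →₀ ℕ) :
    coeff m (Tr p n g) = coeff (p • m + Finsupp.equivFunOnFinite.symm fun _ ↦ p - 1) g := by
  set e₀ := p • m + Finsupp.equivFunOnFinite.symm fun _ ↦ p - 1 with he₀
  have hterm (e : Fin n →₀ ℕ) : coeff m (if ∀ i, p ∣ e i + 1 then
      monomial (Finsupp.equivFunOnFinite.symm fun i ↦ (e i + 1) / p - 1) (coeff e g) else 0) =
      if e₀ = e then coeff e g else 0 := by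
    have he : (∀ i, p ∣ e i + 1) ∧ (Finsupp.equivFunOnFinite.symm fun i ↦ (e i + 1) / p - 1) = m ↔
        e₀ = e := by
      simp only [he₀, Finsupp.ext_iff, ← forall_and, Finsupp.add_apply, Finsupp.smul_apply,
        smul_eq_mul, Finsupp.equivFunOnFinite_symm_apply_apply,
        dvd_add_one_and_div_sub_one_eq_iff hp]
    rw [apply_ite (coeff m), coeff_monomial, coeff_zero, ← ite_and]
    exact if_congr he rfl rfl
  rw [Tr, coeff_sum, Finset.sum_congr rfl fun e _ ↦ hterm e, Finset.sum_ite_eq]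
  exact ite_eq_left_iff.mpr fun h ↦ (notMem_support_iff.mp h).symm

lemma Tr_eq_frobeniusCoord (p n : ℕ) [Fact p.Prime] :
    Tr p n = frobeniusCoord p (Finsupp.equivFunOnFinite.symm fun _ ↦ p - 1) := by
  have hp : p.Prime := Fact.out
  have hfrob (c : ZMod p) : (frobeniusEquiv (ZMod p) p).symm c = c := by
    rw [RingEquiv.symm_apply_eq, frobeniusEquiv_def, ZMod.pow_card]
  ext g m
  rw [coeff_Tr hp.pos, coeff_frobeniusCoord, hfrob]

theorem stmt_6_general {σ R : Type*} [CommRing R] {p : ℕ} [ExpChar R p] [PerfectRing R p]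
    {u : σ →₀ ℕ} (hu : ∀ i, u i < p) (f : MvPolynomial σ R) :
    (∀ g ∈ Ideal.span {f}, frobeniusCoord p u (f ^ (p - 1) * g) ∈ Ideal.span {f}) ∧
      ∀ c : MvPolynomial σ R, c * frobeniusCoord p u (f ^ (p - 1)) = 1 →
        IsFrobeniusSplitting p (fun g ↦ c * frobeniusCoord p u (f ^ (p - 1) * g)) ∧
          ∀ g ∈ Ideal.span {f}, c * frobeniusCoord p u (f ^ (p - 1) * g) ∈ Ideal.span {f} := by
  have hT : IsNearSplitting p (frobeniusCoord p u : MvPolynomial σ R → _) :=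
    isNearSplitting_frobeniusCoord p hu
  have hf : ∀ g ∈ Ideal.span {f}, frobeniusCoord p u (f ^ (p - 1) * g) ∈ Ideal.span {f} :=
    fun g ↦ hT.map_pow_sub_one_mul_mem_span (expChar_ne_zero R p)
  exact ⟨hf, fun c hc ↦
    ⟨hT.isFrobeniusSplitting_mul_comp_mul hc, fun g hg ↦ Ideal.mul_mem_left _ c (hf g hg)⟩⟩

/-- (1) if `Tr(f^{p-1})` is a (constant) unit with inverse `c`, then
`g ↦ c·Tr(f^{p-1}·g)` is a Frobenius splitting; (2) `⟨f⟩` is compatibly near-split by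
`g ↦ Tr(f^{p-1}·g)`, and compatibly split by `g ↦ c·Tr(f^{p-1}·g)` when `c·Tr(f^{p-1}) = 1`. -/
theorem stmt_6 {p : ℕ} (hp : p.Prime) {n : ℕ} (hn : 1 ≤ n)
    (f : MvPolynomial (Fin n) (ZMod p)) :
    (∀ g ∈ Ideal.span {f}, Tr p n (f ^ (p - 1) * g) ∈ Ideal.span {f}) ∧
      ∀ c : ZMod p, C c * Tr p n (f ^ (p - 1)) = 1 →
        IsFrobeniusSplitting p (fun g => C c * Tr p n (f ^ (p - 1) * g)) ∧
          ∀ g ∈ Ideal.span {f}, C c * Tr p n (f ^ (p - 1) * g) ∈ Ideal.span {f} := by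
  have : Fact p.Prime := ⟨hp⟩
  rw [Tr_eq_frobeniusCoord]
  exact (stmt_6_general (fun _ ↦ Nat.sub_one_lt hp.ne_zero) f).imp_right fun h c ↦ h (C c)
end

section
/- Let p be a prime, n ≥ 1, and f ∈ 𝔽_p[x₁,…,xₙ] a polynomial of total degree at most n. Then Tr(f^{p−1}) is the constant polynomial whose value is the coefficient of the monomial ∏ᵢ₌₁ⁿ xᵢ^{p−1} in f^{p−1}. -/
open MvPolynomial

/-! For `p ≠ 0`, the coefficient of `Tr g` at `x^m` is that of `g` at
`x^(p • m + (p - 1, …, p - 1))`, a monomial of degree `p * |m| + n * (p - 1)`. If `m ≠ 0`, this is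
at least `p + n * (p - 1)`, whereas `f ^ (p - 1)` has degree at most `(p - 1) * (n + 1)`, one less,
as soon as `deg f ≤ n + 1`. Hence only the constant term of `Tr (f ^ (p - 1))` can survive. -/

lemma dvd_succ_and_succ_div_sub_one_eq_iff {p a b : ℕ} (hp : p ≠ 0) :
    p ∣ a + 1 ∧ (a + 1) / p - 1 = b ↔ a = p * b + (p - 1) := by
  have hp_pos : 0 < p := Nat.pos_of_ne_zero hp
  constructor
  · rintro ⟨⟨k, hk⟩, rfl⟩
    obtain ⟨j, rfl⟩ : ∃ j, k = j + 1 :=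
      Nat.exists_eq_succ_of_ne_zero (right_ne_zero_of_mul (hk.symm.trans_ne a.succ_ne_zero))
    rw [hk, Nat.mul_div_cancel_left _ hp_pos, Nat.add_sub_cancel]
    rw [mul_add_one] at hk
    omega
  · rintro rfl
    have h_succ : p * b + (p - 1) + 1 = p * (b + 1) := by rw [mul_add_one]; omega
    rw [h_succ, Nat.mul_div_cancel_left _ hp_pos]
    exact ⟨dvd_mul_right p _, Nat.add_sub_cancel _ _⟩

section TraceExponent

variable {σ : Type*} [Fintype σ]

/-- The exponent vector `p • m + (p - 1, …, p - 1)`: for `p ≠ 0`, the one whose monomial `Tr` sends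
to `x^m`. The subtraction is truncated, so for `p = 0` this is the zero vector. -/
noncomputable def traceExponent (p : ℕ) (m : σ →₀ ℕ) : σ →₀ ℕ :=
  p • m + Finsupp.equivFunOnFinite.symm fun _ => p - 1

lemma traceExponent_apply (p : ℕ) (m : σ →₀ ℕ) (i : σ) :
    traceExponent p m i = p * m i + (p - 1) := rfl

lemma traceExponent_zero (p : ℕ) :
    traceExponent p (0 : σ →₀ ℕ) = Finsupp.equivFunOnFinite.symm fun _ => p - 1 := by
  rw [traceExponent, smul_zero, zero_add]

lemma degree_traceExponent (p : ℕ) (m : σ →₀ ℕ) :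
    (traceExponent p m).degree = p * m.degree + Fintype.card σ * (p - 1) := by
  simp only [Finsupp.degree_eq_sum, traceExponent_apply, Finset.sum_add_distrib, Finset.mul_sum,
    Finset.sum_const, Finset.card_univ, smul_eq_mul]

lemma forall_dvd_succ_and_succ_div_sub_one_eq_iff {p : ℕ} (hp : p ≠ 0) {e m : σ →₀ ℕ} :
    ((∀ i, p ∣ e i + 1) ∧ (Finsupp.equivFunOnFinite.symm fun i => (e i + 1) / p - 1) = m) ↔
      e = traceExponent p m := by
  simp only [Finsupp.ext_iff, Finsupp.equivFunOnFinite_symm_apply_apply, ← forall_and,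
    dvd_succ_and_succ_div_sub_one_eq_iff hp, traceExponent_apply]

end TraceExponent

section Tr

variable {p n : ℕ}

lemma coeff_tr (hp : p ≠ 0) (g : MvPolynomial (Fin n) (ZMod p)) (m : Fin n →₀ ℕ) :
    (Tr p n g).coeff m = g.coeff (traceExponent p m) := by
  have coeff_summand (e : Fin n →₀ ℕ) :
      coeff m (if ∀ i, p ∣ e i + 1 then
          monomial (Finsupp.equivFunOnFinite.symm fun i => (e i + 1) / p - 1) (g.coeff e)
        else 0) =
      if traceExponent p m = e then g.coeff e else 0 := by
    rw [apply_ite (coeff m), coeff_monomial, coeff_zero, ← ite_and]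
    exact if_congr ((forall_dvd_succ_and_succ_div_sub_one_eq_iff hp).trans eq_comm) rfl rfl
  simp only [Tr, coeff_sum, coeff_summand, Finset.sum_ite_eq, mem_support_iff, ite_not]
  exact ite_eq_right_iff.mpr Eq.symm

lemma tr_eq_C_of_totalDegree_lt {g : MvPolynomial (Fin n) (ZMod p)}
    (hg : g.totalDegree < p + n * (p - 1)) :
    Tr p n g = C (g.coeff (Finsupp.equivFunOnFinite.symm fun _ => p - 1)) := by
  have hp : p ≠ 0 := by
    rintro rfl
    simp at hg
  ext m
  rw [coeff_tr hp, coeff_C]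
  split_ifs with hm
  · rw [← hm, traceExponent_zero]
  · have one_le_degree : 1 ≤ m.degree :=
      Nat.one_le_iff_ne_zero.mpr fun h => hm ((Finsupp.degree_eq_zero_iff m).mp h).symm
    apply coeff_eq_zero_of_totalDegree_lt
    calc g.totalDegree < p + n * (p - 1) := hg
      _ ≤ p * m.degree + n * (p - 1) := by gcongr; exact Nat.le_mul_of_pos_right p one_le_degree
      _ = (traceExponent p m).degree := by rw [degree_traceExponent, Fintype.card_fin]

end Tr

theorem stmt_8_general {p : ℕ} (hp : p ≠ 0) {n : ℕ}
    (f : MvPolynomial (Fin n) (ZMod p)) (hdeg : f.totalDegree ≤ n + 1) :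
    Tr p n (f ^ (p - 1)) =
      C ((f ^ (p - 1)).coeff (Finsupp.equivFunOnFinite.symm fun _ : Fin n => p - 1)) := by
  apply tr_eq_C_of_totalDegree_lt
  calc (f ^ (p - 1)).totalDegree ≤ (p - 1) * f.totalDegree := totalDegree_pow f (p - 1)
    _ ≤ (p - 1) * (n + 1) := by gcongr
    _ = (p - 1) + n * (p - 1) := by ring
    _ < p + n * (p - 1) := by gcongr; exact Nat.sub_one_lt hp

/-- if `deg f ≤ n`, then `Tr(f^{p-1})` is the constant polynomial whose value
is the coefficient of `∏ᵢ xᵢ^{p-1}` in `f^{p-1}`. -/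
theorem stmt_8 {p : ℕ} (hp : p.Prime) {n : ℕ} (hn : 1 ≤ n)
    (f : MvPolynomial (Fin n) (ZMod p)) (hdeg : f.totalDegree ≤ n) :
    Tr p n (f ^ (p - 1)) =
      C ((f ^ (p - 1)).coeff (Finsupp.equivFunOnFinite.symm fun _ : Fin n => p - 1)) :=
  stmt_8_general hp.ne_zero f (hdeg.trans n.le_succ)
end

section
/- Let p be a prime, n > 0, and f ∈ 𝔽_p[x₁,…,xₙ] a polynomial of total degree at most n. Then the number of points v ∈ 𝔽_pⁿ with f(v) = 0 is congruent modulo p to (−1)^{n−1}·c, where c ∈ 𝔽_p is the coefficient of the monomial ∏ᵢ₌₁ⁿ xᵢ^{p−1} in f^{p−1}. -/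
open MvPolynomial

/-!
By Fermat, the values of `f ^ (q - 1)` over the field with `q` elements are `0` at the zeros of `f`
and `1` elsewhere, so their sum over all points of the affine space is minus the number of zeros.
The sum of a monomial over all points factors into power sums over the field, and vanishes as soon
as one exponent is less than `q - 1`. The degree bound leaves room for only one monomial without
such an exponent, the one whose exponents all equal `q - 1`.
-/

lemma eq_const_of_le_of_sum_le_card_nsmul {σ M : Type*} [Fintype σ] [AddCommMonoid M]
    [PartialOrder M] [IsOrderedCancelAddMonoid M] {d : σ → M} {m : M}
    (hle : ∀ i, m ≤ d i) (hsum : ∑ i, d i ≤ Fintype.card σ • m) : d = fun _ => m := by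
  have hsum_eq : ∑ _i : σ, m = ∑ i, d i :=
    (Finset.sum_le_sum fun i _ => hle i).antisymm
      (by rwa [Finset.sum_const, Finset.card_univ])
  funext i
  exact ((Finset.sum_eq_sum_iff_of_le fun i _ => hle i).mp hsum_eq i (Finset.mem_univ i)).symm

section FiniteField

variable {K : Type*} [Field K] [Fintype K]

local notation "q" => Fintype.card K

lemma sum_pow_card_sub_one_eq_card_sub_card_zeros {α : Type*} [Fintype α] (g : α → K) :
    ∑ a, g a ^ (q - 1) = Fintype.card α - Nat.card {a // g a = 0} := by
  classical
  have hpow (x : K) : x ^ (q - 1) = 1 - if x = 0 then 1 else 0 := by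
    split_ifs with hx
    · rw [hx, zero_pow (Nat.sub_ne_zero_of_lt Fintype.one_lt_card), sub_self]
    · rw [FiniteField.pow_card_sub_one_eq_one x hx, sub_zero]
  simp only [hpow, Finset.sum_sub_distrib, Finset.sum_boole, Nat.card_eq_fintype_card,
    Fintype.card_subtype, Finset.sum_const, Finset.card_univ, nsmul_one]

lemma sum_pow_card_sub_one_eq_neg_one : ∑ a : K, a ^ (q - 1) = -1 := by
  simpa using sum_pow_card_sub_one_eq_card_sub_card_zeros (id : K → K)

variable {σ : Type*} [Fintype σ]

lemma sum_prod_pow_eq_ite [DecidableEq σ] {d : σ → ℕ}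
    (hd : ∑ i, d i ≤ Fintype.card σ * (q - 1)) :
    ∑ v : σ → K, ∏ i, v i ^ d i =
      if d = fun _ => q - 1 then (-1) ^ Fintype.card σ else 0 := by
  have hfactor : ∑ v : σ → K, ∏ i, v i ^ d i = ∏ i, ∑ a : K, a ^ d i := by
    rw [Finset.prod_univ_sum, Fintype.piFinset_univ]
  rw [hfactor]
  split_ifs with h
  · simp only [h, sum_pow_card_sub_one_eq_neg_one, Finset.prod_const, Finset.card_univ]
  · obtain ⟨i, hi⟩ : ∃ i, d i < q - 1 := by
      contrapose! h
      exact eq_const_of_le_of_sum_le_card_nsmul h hd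
    exact Finset.prod_eq_zero (Finset.mem_univ i) (FiniteField.sum_pow_lt_card_sub_one K _ hi)

lemma sum_eval_eq_neg_one_pow_mul_coeff [DecidableEq σ] {g : MvPolynomial σ K}
    (hg : g.totalDegree ≤ Fintype.card σ * (q - 1)) :
    ∑ v, eval v g =
      (-1) ^ Fintype.card σ * g.coeff (Finsupp.equivFunOnFinite.symm fun _ => q - 1) := by
  set D : σ →₀ ℕ := Finsupp.equivFunOnFinite.symm fun _ => q - 1
  have hmonomial (d) (hd : d ∈ g.support) :
      ∑ v : σ → K, ∏ i, v i ^ d i = if d = D then (-1) ^ Fintype.card σ else 0 := by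
    have hdeg : ∑ i, d i ≤ Fintype.card σ * (q - 1) :=
      (Finsupp.sum_fintype d _ fun _ => rfl).symm.trans_le ((le_totalDegree hd).trans hg)
    have hd_eq : ⇑d = (fun _ => q - 1) ↔ d = D := Finsupp.equivFunOnFinite.eq_symm_apply.symm
    simp only [sum_prod_pow_eq_ite hdeg, hd_eq]
  calc
    ∑ v, eval v g = ∑ d ∈ g.support, g.coeff d * ∑ v : σ → K, ∏ i, v i ^ d i := by
      simp only [eval_eq', Finset.mul_sum]
      exact Finset.sum_comm
    _ = ∑ d ∈ g.support, if d = D then g.coeff d * (-1) ^ Fintype.card σ else 0 :=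
      Finset.sum_congr rfl fun d hd => by rw [hmonomial d hd, mul_ite, mul_zero]
    _ = (-1) ^ Fintype.card σ * g.coeff D := by
      rw [Finset.sum_ite_eq', mul_comm, ite_eq_left_iff, notMem_support_iff]
      exact fun hD => by rw [hD, mul_zero]

theorem stmt_9_general [Nonempty σ] (f : MvPolynomial σ K) (hdeg : f.totalDegree ≤ Fintype.card σ) :
    (Nat.card {v : σ → K // eval v f = 0} : K) =
      (-1) ^ (Fintype.card σ - 1) *
        (f ^ (q - 1)).coeff (Finsupp.equivFunOnFinite.symm fun _ => q - 1) := by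
  classical
  have hpow_deg : (f ^ (q - 1)).totalDegree ≤ Fintype.card σ * (q - 1) := by
    rw [mul_comm]
    exact (totalDegree_pow f (q - 1)).trans (Nat.mul_le_mul_left _ hdeg)
  have hpoints : (Fintype.card (σ → K) : K) = 0 := by
    rw [Fintype.card_fun, Nat.cast_pow, FiniteField.cast_card_eq_zero,
      zero_pow Fintype.card_ne_zero]
  have hsign : (-1 : K) ^ Fintype.card σ = -(-1) ^ (Fintype.card σ - 1) := by
    rw [← pow_sub_one_mul Fintype.card_ne_zero, mul_neg_one]
  have hcount := sum_pow_card_sub_one_eq_card_sub_card_zeros fun v => eval v f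
  simp only [← map_pow, sum_eval_eq_neg_one_pow_mul_coeff hpow_deg, hpoints, zero_sub] at hcount
  rw [hsign, neg_mul, neg_inj] at hcount
  exact hcount.symm

end FiniteField

/-- for `f ∈ 𝔽_p[x₁,…,xₙ]` of total degree at most `n > 0`, the number of
points `v ∈ 𝔽_pⁿ` with `f(v) = 0` is congruent mod `p` to `(−1)^{n−1}·c`, where `c` is
the coefficient of `∏ᵢ xᵢ^{p−1}` in `f^{p−1}`. -/
theorem stmt_9 {p : ℕ} (hp : p.Prime) {n : ℕ} (hn : 0 < n)
    (f : MvPolynomial (Fin n) (ZMod p)) (hdeg : f.totalDegree ≤ n) :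
    (Nat.card {v : Fin n → ZMod p // eval v f = 0} : ZMod p) =
      (-1) ^ (n - 1) *
        (f ^ (p - 1)).coeff (Finsupp.equivFunOnFinite.symm fun _ : Fin n => p - 1) := by
  have : Fact p.Prime := ⟨hp⟩
  have : Nonempty (Fin n) := ⟨⟨0, hn⟩⟩
  simpa only [ZMod.card, Fintype.card_fin] using stmt_9_general f (by rwa [Fintype.card_fin])
end

section
/- Let p be a prime, n ≥ 1, and f ∈ 𝔽_p[x₁,…,xₙ] a polynomial of total degree at most n. If the vector (1,1,…,1) ∈ ℝⁿ does not lie in the Newton polytope of f, i.e. in the convex hull in ℝⁿ of the exponent vectors of the monomials appearing in f with nonzero coefficient, then Tr(f^{p−1}) = 0. -/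
open MvPolynomial

/-!
Every exponent vector of `f ^ (p - 1)` is `p - 1` times a point of the Newton polytope of `f`, and
its coordinate sum is at most `(p - 1) * n` because `deg f ≤ n`. A monomial that survives `Tr` has
all exponents at least `p - 1`, hence all equal to `p - 1`, so dividing by `p - 1` puts `(1,…,1)`
in the Newton polytope.
-/

open scoped Pointwise

section NewtonPolytope

variable {σ R : Type*} [CommSemiring R]

/-- The Newton polytope of a polynomial: the convex hull in `σ → ℝ` of the exponent vectors of its
monomials. It is empty for the zero polynomial. -/
def newtonPolytope (f : MvPolynomial σ R) : Set (σ → ℝ) :=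
  convexHull ℝ ((fun (m : σ →₀ ℕ) (i : σ) => (m i : ℝ)) '' (f.support : Set (σ →₀ ℕ)))

theorem convex_newtonPolytope (f : MvPolynomial σ R) : Convex ℝ (newtonPolytope f) :=
  convex_convexHull ℝ _

theorem mem_newtonPolytope_of_mem_support {f : MvPolynomial σ R} {m : σ →₀ ℕ}
    (hm : m ∈ f.support) : (fun i => (m i : ℝ)) ∈ newtonPolytope f :=
  subset_convexHull ℝ _ (Set.mem_image_of_mem _ hm)

theorem newtonPolytope_mul_subset (f g : MvPolynomial σ R) :
    newtonPolytope (f * g) ⊆ newtonPolytope f + newtonPolytope g := by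
  classical
  refine convexHull_min ?_ ((convex_newtonPolytope f).add (convex_newtonPolytope g))
  rintro _ ⟨m, hm, rfl⟩
  obtain ⟨a, ha, b, hb, rfl⟩ := Finset.mem_add.mp (support_mul f g hm)
  refine ⟨_, mem_newtonPolytope_of_mem_support ha, _, mem_newtonPolytope_of_mem_support hb, ?_⟩
  ext i
  simp

theorem newtonPolytope_pow_subset (f : MvPolynomial σ R) {k : ℕ} (hk : k ≠ 0) :
    newtonPolytope (f ^ k) ⊆ (k : ℝ) • newtonPolytope f := by
  induction k, Nat.one_le_iff_ne_zero.mpr hk using Nat.le_induction with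
  | base => simp
  | succ k hk_pos ih =>
    calc newtonPolytope (f ^ (k + 1))
        ⊆ newtonPolytope (f ^ k) + newtonPolytope f := by
          rw [pow_succ]
          exact newtonPolytope_mul_subset (f ^ k) f
      _ ⊆ (k : ℝ) • newtonPolytope f + (1 : ℝ) • newtonPolytope f := by
          rw [one_smul]
          exact Set.add_subset_add_right (ih (Nat.one_le_iff_ne_zero.mp hk_pos))
      _ = ((k + 1 : ℕ) : ℝ) • newtonPolytope f := by
          rw [← (convex_newtonPolytope f).add_smul k.cast_nonneg zero_le_one, Nat.cast_succ]

theorem eq_of_le_of_mem_support_pow [Fintype σ] {f : MvPolynomial σ R}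
    (hdeg : f.totalDegree ≤ Fintype.card σ) {k : ℕ} {m : σ →₀ ℕ}
    (hm : m ∈ (f ^ k).support) (hle : ∀ i, k ≤ m i) (i : σ) : m i = k := by
  have hsum : ∑ i, m i ≤ ∑ _i : σ, k :=
    calc ∑ i, m i = m.sum fun _ e => e := (m.sum_fintype (fun _ e => e) fun _ => rfl).symm
      _ ≤ (f ^ k).totalDegree := le_totalDegree hm
      _ ≤ k * f.totalDegree := totalDegree_pow f k
      _ ≤ k * Fintype.card σ := Nat.mul_le_mul_left k hdeg
      _ = ∑ _i : σ, k := by simp [mul_comm]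
  have hall := (Finset.sum_eq_sum_iff_of_le fun i _ => hle i).mp
    ((Finset.sum_le_sum fun i _ => hle i).antisymm hsum)
  exact (hall i (Finset.mem_univ i)).symm

theorem one_mem_newtonPolytope_of_mem_support_pow [Fintype σ] {f : MvPolynomial σ R}
    (hdeg : f.totalDegree ≤ Fintype.card σ) {k : ℕ} (hk : k ≠ 0) {m : σ →₀ ℕ}
    (hm : m ∈ (f ^ k).support) (hle : ∀ i, k ≤ m i) : 1 ∈ newtonPolytope f := by
  have hm_eq : (fun i => (m i : ℝ)) = (k : ℝ) • 1 := by
    ext i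
    simp [eq_of_le_of_mem_support_pow hdeg hm hle i]
  have hmem : (k : ℝ) • (1 : σ → ℝ) ∈ (k : ℝ) • newtonPolytope f :=
    hm_eq ▸ newtonPolytope_pow_subset f hk (mem_newtonPolytope_of_mem_support hm)
  exact (Set.smul_mem_smul_set_iff₀ (Nat.cast_ne_zero.mpr hk) _ _).mp hmem

end NewtonPolytope

theorem Tr_eq_zero_of_exists_add_one_lt {p n : ℕ} {g : MvPolynomial (Fin n) (ZMod p)}
    (h : ∀ m ∈ g.support, ∃ i, m i + 1 < p) : Tr p n g = 0 := by
  refine Finset.sum_eq_zero fun m hm => if_neg fun hdvd => ?_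
  obtain ⟨i, hi⟩ := h m hm
  exact Nat.not_dvd_of_pos_of_lt (m i).succ_pos hi (hdvd i)

theorem stmt_11_general {p : ℕ} (hp : 1 < p) {n : ℕ} (f : MvPolynomial (Fin n) (ZMod p))
    (hdeg : f.totalDegree ≤ n) (hnewton : 1 ∉ newtonPolytope f) :
    Tr p n (f ^ (p - 1)) = 0 := by
  refine Tr_eq_zero_of_exists_add_one_lt fun m hm => ?_
  by_contra! hge
  have hdeg_card : f.totalDegree ≤ Fintype.card (Fin n) := by rwa [Fintype.card_fin]
  exact hnewton <| one_mem_newtonPolytope_of_mem_support_pow hdeg_card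
    (Nat.sub_ne_zero_of_lt hp) hm fun i => Nat.sub_le_of_le_add (hge i)

/-- if `(1,…,1)` does not lie in the Newton polytope of `f` (the convex hull
in `ℝⁿ` of the exponent vectors of the monomials of `f`), and `deg f ≤ n`, then
`Tr(f^{p−1}) = 0`. -/
theorem stmt_11 {p : ℕ} (hp : p.Prime) {n : ℕ} (hn : 1 ≤ n)
    (f : MvPolynomial (Fin n) (ZMod p)) (hdeg : f.totalDegree ≤ n)
    (hnewton : (fun _ : Fin n => (1 : ℝ)) ∉
      convexHull ℝ ((fun m : Fin n →₀ ℕ => fun i : Fin n => (m i : ℝ)) ''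
        (f.support : Set (Fin n →₀ ℕ)))) :
    Tr p n (f ^ (p - 1)) = 0 :=
  stmt_11_general hp.one_lt f hdeg hnewton
end
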